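/- Let [(Qᵢ,𝒬ᵢ),Tᵢ,(Δᵢ,𝒟ᵢ)], i = 1,2, be two generators and (f,g) a transition-preserving map from T₁ to T₂. Then for every probability measure μ on (Q₁,𝒬₁), the path measure of T₂ started from the pushforward f_*(μ) equals the pushforward of the path measure of T₁ started from μ under the coordinatewise map g^ℕ: Δ₁^ℕ → Δ₂^ℕ, (yₙ)ₙ ↦ (g(yₙ))ₙ; i.e. G_{T₂}(f_*(μ)) = (g^ℕ)_*(G_{T₁}(μ)). In particular, if a stochastic process (Yₙ)_{n∈ℕ} in (Δ₁,𝒟₁) is generated by T₁, then the process (g∘Yₙ)_{n∈ℕ} in (Δ₂,𝒟₂) is generated by T₂. -/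

import Mathlib

open MeasureTheory ProbabilityTheory
open scoped ENNReal

namespace HiddenSources

variable {Q Δ : Type*}

/-- The iterated integral appearing in the finite-dimensional marginals:
`fdmAux T n x B = ∫_{Q×B₁}⋯∫_{Q×Bₙ} T(x_{n-1}, d(xₙ,yₙ)) ⋯ T(x, d(x₁,y₁))`. -/
noncomputable def fdmAux [MeasurableSpace Q] [MeasurableSpace Δ] (T : Kernel Q (Q × Δ)) :
    (n : ℕ) → Q → (Fin n → Set Δ) → ℝ≥0∞
  | 0, _, _ => 1
  | n + 1, x, B =>
      ∫⁻ p : Q × Δ, Set.indicator (B 0) (fun _ => fdmAux T n p.1 fun i => B i.succ) p.2 ∂(T x)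

/-- The finite-dimensional marginal `Pₙ^{μ,T}(B₁ × ⋯ × Bₙ)` of the observed process of the
generator `T` with initial distribution `μ`. -/
noncomputable def fdm [MeasurableSpace Q] [MeasurableSpace Δ] (T : Kernel Q (Q × Δ))
    (μ : Measure Q) (n : ℕ) (B : Fin n → Set Δ) : ℝ≥0∞ :=
  ∫⁻ x, fdmAux T n x B ∂μ

/-- `P` is the path measure `P^{μ,T}` on `Δ^ℕ`: a probability measure whose cylinder
sets have measure given by the finite-dimensional marginals `Pₙ^{μ,T}`. -/
def IsPathMeasure [MeasurableSpace Q] [MeasurableSpace Δ] (T : Kernel Q (Q × Δ))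
    (μ : Measure Q) (P : Measure (ℕ → Δ)) : Prop :=
  IsProbabilityMeasure P ∧
    ∀ (n : ℕ) (B : Fin n → Set Δ), (∀ i, MeasurableSet (B i)) →
      P {y | ∀ i : Fin n, y i ∈ B i} = fdm T μ n B

/-- `im(G_T)`: the set of stochastic processes (identified with their path measures on
`Δ^ℕ`) generated by `T`, as the initial distribution `μ` ranges over the probability
measures on `Q`. -/
def genSet [MeasurableSpace Q] [MeasurableSpace Δ] (T : Kernel Q (Q × Δ)) :
    Set (Measure (ℕ → Δ)) :=
  {P | ∃ μ : Measure Q, IsProbabilityMeasure μ ∧ IsPathMeasure T μ P}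

/-- `(f, g)` is a transition-preserving map (morphism of generators) from `T₁` to `T₂`:
`f`, `g` are measurable and `T₂(f(x), A × B) = T₁(x, f⁻¹(A) × g⁻¹(B))` for all `x`
and measurable `A`, `B`. -/
def TransitionPreserving {Q₁ Q₂ Δ₁ Δ₂ : Type*}
    [MeasurableSpace Q₁] [MeasurableSpace Q₂] [MeasurableSpace Δ₁] [MeasurableSpace Δ₂]
    (T₁ : Kernel Q₁ (Q₁ × Δ₁)) (T₂ : Kernel Q₂ (Q₂ × Δ₂))
    (f : Q₁ → Q₂) (g : Δ₁ → Δ₂) : Prop :=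
  Measurable f ∧ Measurable g ∧
    ∀ (x : Q₁) (A : Set Q₂) (B : Set Δ₂), MeasurableSet A → MeasurableSet B →
      T₂ (f x) (A ×ˢ B) = T₁ x ((f ⁻¹' A) ×ˢ (g ⁻¹' B))

lemma measurable_fdmAux [MeasurableSpace Q] [MeasurableSpace Δ] (T : Kernel Q (Q × Δ))
    (n : ℕ) : ∀ (B : Fin n → Set Δ), (∀ i, MeasurableSet (B i)) →
      Measurable fun x => fdmAux T n x B := by
  induction n with
  | zero => intro B _; simp only [fdmAux]; exact measurable_const
  | succ n ih =>
    intro B hB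
    simp only [fdmAux]
    apply Measurable.lintegral_kernel
    exact Measurable.indicator (f := fun p : Q × Δ => fdmAux T n p.1 fun i => B i.succ)
      (s := Prod.snd ⁻¹' (B 0))
      ((ih _ fun i => hB i.succ).comp measurable_fst) (measurable_snd (hB 0))

lemma measurable_step [MeasurableSpace Q] [MeasurableSpace Δ] (T : Kernel Q (Q × Δ))
    (n : ℕ) (B : Fin (n + 1) → Set Δ) (hB : ∀ i, MeasurableSet (B i)) :
    Measurable fun p : Q × Δ =>
      Set.indicator (B 0) (fun _ => fdmAux T n p.1 fun i => B i.succ) p.2 :=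
  Measurable.indicator (f := fun p : Q × Δ => fdmAux T n p.1 fun i => B i.succ)
    (s := Prod.snd ⁻¹' (B 0))
    ((measurable_fdmAux T n _ fun i => hB i.succ).comp measurable_fst) (measurable_snd (hB 0))

lemma TransitionPreserving.map_eq {Q₁ Q₂ Δ₁ Δ₂ : Type*}
    [MeasurableSpace Q₁] [MeasurableSpace Q₂] [MeasurableSpace Δ₁] [MeasurableSpace Δ₂]
    {T₁ : Kernel Q₁ (Q₁ × Δ₁)} {T₂ : Kernel Q₂ (Q₂ × Δ₂)}
    [IsMarkovKernel T₁] [IsMarkovKernel T₂]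
    {f : Q₁ → Q₂} {g : Δ₁ → Δ₂} (hfg : TransitionPreserving T₁ T₂ f g) (x : Q₁) :
    T₂ (f x) = (T₁ x).map (Prod.map f g) := by
  obtain ⟨hf, hg, h⟩ := hfg
  have hm : Measurable (Prod.map f g) := hf.prodMap hg
  have : IsProbabilityMeasure ((T₁ x).map (Prod.map f g)) :=
    Measure.isProbabilityMeasure_map hm.aemeasurable
  apply Measure.ext_prod
  intro A B hA hB
  rw [h x A B hA hB, Measure.map_apply hm (hA.prod hB)]
  rfl

lemma fdmAux_map {Q₁ Q₂ Δ₁ Δ₂ : Type*}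
    [MeasurableSpace Q₁] [MeasurableSpace Q₂] [MeasurableSpace Δ₁] [MeasurableSpace Δ₂]
    {T₁ : Kernel Q₁ (Q₁ × Δ₁)} {T₂ : Kernel Q₂ (Q₂ × Δ₂)}
    [IsMarkovKernel T₁] [IsMarkovKernel T₂]
    {f : Q₁ → Q₂} {g : Δ₁ → Δ₂} (hfg : TransitionPreserving T₁ T₂ f g) (n : ℕ) :
    ∀ (x : Q₁) (B : Fin n → Set Δ₂), (∀ i, MeasurableSet (B i)) →
      fdmAux T₂ n (f x) B = fdmAux T₁ n x fun i => g ⁻¹' (B i) := by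
  induction n with
  | zero => intro x B _; rfl
  | succ n ih =>
    intro x B hB
    simp only [fdmAux]
    rw [hfg.map_eq x, lintegral_map (measurable_step T₂ n B hB) (hfg.1.prodMap hfg.2.1)]
    refine lintegral_congr fun p => ?_
    simp only [Prod.map_fst, Prod.map_snd, ih p.1 _ fun i => hB i.succ]
    rfl

/-- **Theorem 3.2.** If `(f,g)` is a transition-preserving map from `T₁` to `T₂`, then
`G_{T₂}(f_*(μ)) = (g^ℕ)_*(G_{T₁}(μ))` for every initial probability measure `μ`; in
particular, if a process is generated by `T₁`, then its image under the coordinatewise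
map `g^ℕ` is generated by `T₂`. -/
theorem pathMeasure_map {Q₁ Q₂ Δ₁ Δ₂ : Type*}
    [MeasurableSpace Q₁] [MeasurableSpace Q₂] [MeasurableSpace Δ₁] [MeasurableSpace Δ₂]
    (T₁ : Kernel Q₁ (Q₁ × Δ₁)) (T₂ : Kernel Q₂ (Q₂ × Δ₂))
    [IsMarkovKernel T₁] [IsMarkovKernel T₂]
    (f : Q₁ → Q₂) (g : Δ₁ → Δ₂) (hfg : TransitionPreserving T₁ T₂ f g) :
    (∀ (μ : Measure Q₁), IsProbabilityMeasure μ → ∀ P : Measure (ℕ → Δ₁),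
        IsPathMeasure T₁ μ P →
          IsPathMeasure T₂ (μ.map f) (P.map fun y n => g (y n))) ∧
      ∀ P ∈ genSet T₁, P.map (fun y n => g (y n)) ∈ genSet T₂ := by
  obtain ⟨hf, hg, -⟩ := id hfg
  have hG : Measurable fun (y : ℕ → Δ₁) n => g (y n) := by fun_prop
  have key : ∀ (μ : Measure Q₁), IsProbabilityMeasure μ → ∀ P : Measure (ℕ → Δ₁),
        IsPathMeasure T₁ μ P →
          IsPathMeasure T₂ (μ.map f) (P.map fun y n => g (y n)) := by
    rintro μ _ P ⟨hP, h⟩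
    refine ⟨Measure.isProbabilityMeasure_map hG.aemeasurable, fun n B hB => ?_⟩
    have hS : MeasurableSet {y : ℕ → Δ₂ | ∀ i : Fin n, y i ∈ B i} := by
      rw [Set.setOf_forall]
      exact MeasurableSet.iInter fun i => measurable_pi_apply (i : ℕ) (hB i)
    rw [Measure.map_apply hG hS, fdm, lintegral_map (measurable_fdmAux T₂ n B hB) hf]
    simp only [fdmAux_map hfg n _ B hB]
    exact h n (fun i => g ⁻¹' (B i)) fun i => hg (hB i)
  refine ⟨key, ?_⟩
  rintro P ⟨μ, hμ, hP⟩
  exact ⟨μ.map f, Measure.isProbabilityMeasure_map hf.aemeasurable, key μ hμ P hP⟩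

end HiddenSources
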